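/- arXiv:1810.08900 — 2 statements merged into one kernel-verified Lean document; each statement's English description precedes it below -/
import Mathlib

section
/- Let ℓ > 0, E > 0, h > 0, κ > 0, −1 < ν < 1, and set D_b = E h³/(12(1 − ν²)), G = E/(2(1 + ν)), D_s = κ G h and α = 12 D_b / (D_s ℓ²). With w(s) = (1 − s/ℓ)w_i + (s/ℓ)w_j, β_s(s) = (1 − s/ℓ)β_i + (s/ℓ)β_j + 4(s/ℓ)(1 − s/ℓ)Δβ and the constant assumed shear strain γ̄ = −(4/(3κ(1 − ν)))(h/ℓ)²Δβ, the discrete shear constraint ∫₀^ℓ (w'(s) + β_s(s) − γ̄) ds = 0 holds if and only if (w_j − w_i) + (ℓ/2)(β_i + β_j) + (2/3)·ℓ·(1 + α)·Δβ = 0. -/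
/-!
In the reference coordinate `t = s / ℓ` the rotation integrates to `(βi + βj) / 2 + (2 / 3) Δβ`,
and the fundamental theorem of calculus makes `∫ w'` depend on the end values of `w` only. The
factor `1 + α` appears because the common factor `1 + ν` of `1 - ν ^ 2` and of the shear modulus
cancels in `α = (2 / (κ (1 - ν))) (h / ℓ) ^ 2`, so that the assumed strain is `-(2 / 3) α Δβ`.
-/

open intervalIntegral

/-- The tangential rotation along an edge in the reference coordinate `t = s / ℓ ∈ [0, 1]`: the
linear interpolant of the nodal rotations `βi`, `βj` plus a quadratic bubble which vanishes at both
nodes and has mid-edge value `Δβ`. -/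
noncomputable def edgeRotation (βi βj Δβ t : ℝ) : ℝ :=
  (1 - t) * βi + t * βj + 4 * t * (1 - t) * Δβ

/-- The bending rigidity `D_b` of a plate of thickness `h`, Young's modulus `E` and Poisson's
ratio `ν`. -/
noncomputable def bendingRigidity (E h ν : ℝ) : ℝ :=
  E * h ^ 3 / (12 * (1 - ν ^ 2))

/-- The transverse shear rigidity `D_s = κ G h` of a plate, with the shear modulus `G` expressed
through Young's modulus `E` and Poisson's ratio `ν`. -/
noncomputable def shearRigidity (κ E h ν : ℝ) : ℝ :=
  κ * (E / (2 * (1 + ν))) * h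

/-- The constant transverse shear strain `γ̄` assumed along an edge of length `ℓ`, as a function of
the mid-edge rotation increment `Δβ`. -/
noncomputable def assumedShearStrain (κ ν h ℓ Δβ : ℝ) : ℝ :=
  -(4 / (3 * κ * (1 - ν))) * (h / ℓ) ^ 2 * Δβ

theorem continuous_edgeRotation (βi βj Δβ : ℝ) : Continuous (edgeRotation βi βj Δβ) := by
  unfold edgeRotation
  fun_prop

theorem integral_edgeRotation (βi βj Δβ : ℝ) :
    ∫ t in (0 : ℝ)..1, edgeRotation βi βj Δβ t = (βi + βj) / 2 + 2 / 3 * Δβ := by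
  have expand (t : ℝ) : edgeRotation βi βj Δβ t =
      βi + (βj - βi + 4 * Δβ) * t - 4 * Δβ * t ^ 2 := by
    unfold edgeRotation
    ring
  simp_rw [expand]
  rw [integral_sub (Continuous.intervalIntegrable (by fun_prop) _ _)
      (Continuous.intervalIntegrable (by fun_prop) _ _),
    integral_add (Continuous.intervalIntegrable (by fun_prop) _ _)
      (Continuous.intervalIntegrable (by fun_prop) _ _),
    integral_const, integral_const_mul, integral_const_mul, integral_id, integral_pow, smul_eq_mul]
  push_cast
  ring

theorem integral_edgeRotation_div {ℓ : ℝ} (hℓ : ℓ ≠ 0) (βi βj Δβ : ℝ) :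
    ∫ s in (0 : ℝ)..ℓ, edgeRotation βi βj Δβ (s / ℓ) = ℓ * ((βi + βj) / 2 + 2 / 3 * Δβ) := by
  rw [integral_comp_div _ hℓ, zero_div, div_self hℓ, integral_edgeRotation, smul_eq_mul]

theorem integral_deriv_add_edgeRotation_sub {ℓ : ℝ} (hℓ : ℓ ≠ 0) {w : ℝ → ℝ}
    (hw : ∀ s ∈ Set.uIcc 0 ℓ, DifferentiableAt ℝ w s)
    (hw' : IntervalIntegrable (deriv w) MeasureTheory.volume 0 ℓ) (βi βj Δβ γ : ℝ) :
    ∫ s in (0 : ℝ)..ℓ, (deriv w s + edgeRotation βi βj Δβ (s / ℓ) - γ) =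
      (w ℓ - w 0) + ℓ * ((βi + βj) / 2 + 2 / 3 * Δβ) - ℓ * γ := by
  have hβ : IntervalIntegrable (fun s ↦ edgeRotation βi βj Δβ (s / ℓ)) MeasureTheory.volume 0 ℓ :=
    ((continuous_edgeRotation βi βj Δβ).comp (continuous_id.div_const ℓ)).intervalIntegrable _ _
  rw [integral_sub (hw'.add hβ) intervalIntegrable_const, integral_add hw' hβ,
    integral_deriv_eq_sub hw hw', integral_edgeRotation_div hℓ, integral_const, sub_zero,
    smul_eq_mul]

theorem bendingRigidity_div_shearRigidity {E ν : ℝ} (hE : E ≠ 0) (hν : 1 + ν ≠ 0) (h κ : ℝ) :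
    bendingRigidity E h ν / shearRigidity κ E h ν = h ^ 2 / (6 * κ * (1 - ν)) := by
  have factor : 1 - ν ^ 2 = (1 - ν) * (1 + ν) := by ring
  unfold bendingRigidity shearRigidity
  rw [factor]
  field_simp
  ring

theorem assumedShearStrain_eq {E ν : ℝ} (hE : E ≠ 0) (hν : 1 + ν ≠ 0) (h κ ℓ Δβ : ℝ) :
    assumedShearStrain κ ν h ℓ Δβ =
      -(2 / 3 * (12 * bendingRigidity E h ν / (shearRigidity κ E h ν * ℓ ^ 2)) * Δβ) := by
  unfold assumedShearStrain
  rw [mul_comm 12, mul_div_mul_comm, bendingRigidity_div_shearRigidity hE hν]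
  field_simp
  ring

theorem discrete_shear_constraint_iff_general {ℓ : ℝ} (hℓ : ℓ ≠ 0) {w : ℝ → ℝ}
    (hw : ∀ s ∈ Set.uIcc 0 ℓ, DifferentiableAt ℝ w s)
    (hw' : IntervalIntegrable (deriv w) MeasureTheory.volume 0 ℓ) (βi βj : ℝ) {Δβ α γ : ℝ}
    (hγ : γ = -(2 / 3 * α * Δβ)) :
    ∫ s in (0 : ℝ)..ℓ, (deriv w s + edgeRotation βi βj Δβ (s / ℓ) - γ) = 0 ↔
      (w ℓ - w 0) + ℓ / 2 * (βi + βj) + 2 / 3 * ℓ * (1 + α) * Δβ = 0 := by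
  have collect : (w ℓ - w 0) + ℓ * ((βi + βj) / 2 + 2 / 3 * Δβ) - ℓ * γ =
      (w ℓ - w 0) + ℓ / 2 * (βi + βj) + 2 / 3 * ℓ * (1 + α) * Δβ := by
    rw [hγ]
    ring
  rw [integral_deriv_add_edgeRotation_sub hℓ hw hw', collect]

/-- For `ℓ, E, h, κ > 0`, `−1 < ν < 1`, with `D_b = E h³/(12(1 − ν²))`,
`G = E/(2(1 + ν))`, `D_s = κ G h` and `α = 12 D_b/(D_s ℓ²)`, the discrete shear
constraint `∫₀^ℓ (w'(s) + β_s(s) − γ̄) ds = 0` — where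
`w(s) = (1 − s/ℓ)w_i + (s/ℓ)w_j`,
`β_s(s) = (1 − s/ℓ)β_i + (s/ℓ)β_j + 4(s/ℓ)(1 − s/ℓ)Δβ` and
`γ̄ = −(4/(3κ(1 − ν)))(h/ℓ)²Δβ` — holds iff
`(w_j − w_i) + (ℓ/2)(β_i + β_j) + (2/3)ℓ(1 + α)Δβ = 0`. -/
theorem discrete_shear_constraint_iff
    (ℓ E h κ ν : ℝ) (hℓ : 0 < ℓ) (hE : 0 < E) (hh : 0 < h) (hκ : 0 < κ)
    (hν₁ : -1 < ν) (hν₂ : ν < 1)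
    (Db G Ds α : ℝ)
    (hDb : Db = E * h ^ 3 / (12 * (1 - ν ^ 2)))
    (hG : G = E / (2 * (1 + ν)))
    (hDs : Ds = κ * G * h)
    (hα : α = 12 * Db / (Ds * ℓ ^ 2))
    (wi wj βi βj Δβ γbar : ℝ)
    (hγ : γbar = -(4 / (3 * κ * (1 - ν))) * (h / ℓ) ^ 2 * Δβ) :
    (∫ s in (0 : ℝ)..ℓ,
        (deriv (fun s : ℝ => (1 - s / ℓ) * wi + (s / ℓ) * wj) s
          + ((1 - s / ℓ) * βi + (s / ℓ) * βj + 4 * (s / ℓ) * (1 - s / ℓ) * Δβ)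
          - γbar)) = 0
      ↔ (wj - wi) + (ℓ / 2) * (βi + βj) + (2 / 3) * ℓ * (1 + α) * Δβ = 0 := by
  have hw : ContDiff ℝ 1 fun s : ℝ ↦ (1 - s / ℓ) * wi + (s / ℓ) * wj := by fun_prop
  have hγα : γbar = -(2 / 3 * α * Δβ) := by
    rw [hγ, hα, hDs, hG, hDb]
    exact assumedShearStrain_eq hE.ne' (by linarith) h κ ℓ Δβ
  simpa [edgeRotation, hℓ.ne'] using discrete_shear_constraint_iff_general hℓ.ne'
    (fun s _ ↦ hw.differentiable one_ne_zero s)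
    ((hw.continuous_deriv le_rfl).intervalIntegrable 0 ℓ) βi βj hγα
end

section
/- Fix E > 0, κ > 0, −1 < ν < 1, ℓ > 0 and nodal values w_i, w_j, β_i, β_j, and let g = (w_j − w_i) + (ℓ/2)(β_i + β_j). For thickness h > 0 set α(h) = 2h²/(κ(1 − ν)ℓ²), Δβ(h) = −(3/(2ℓ(1 + α(h))))·g and γ̄(h) = (α(h)/(1 + α(h)))·(g/ℓ). Then as h → 0⁺: (i) γ̄(h) → 0 with γ̄(h)/h² → 2g/(κ(1 − ν)ℓ³), and (ii) Δβ(h) → −(3/(2ℓ))·g, so in the limit the nodal values satisfy the discrete Kirchhoff constraint (w_j − w_i) + (ℓ/2)(β_i + β_j) + (2/3)ℓ·Δβ = 0 with Δβ = lim Δβ(h). In particular the influence of shear deformations vanishes with the thickness, so the formulation is free of shear locking at the edge level. -/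
open Filter Topology

/-! With `D = κ (1 - ν) ℓ²` the factor `α / (1 + α)` equals `2 h² / (D + 2 h²)`, so
`γ̄ / h² = 2 / (D + 2 h²) · (g / ℓ)` extends continuously to `h = 0`. The limits of `γ̄` and `Δβ`
follow from `α → 0`. -/

theorem div_div_one_add_div {𝕜 : Type*} [Field 𝕜] (a : 𝕜) {D : 𝕜} (hD : D ≠ 0) :
    a / D / (1 + a / D) = a / (D + a) := by
  rw [one_add_div hD, div_div_div_cancel_right₀ hD]

theorem discreteKirchhoff_constraint {𝕜 : Type*} [Field 𝕜] [CharZero 𝕜] (g : 𝕜) {ℓ : 𝕜}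
    (hℓ : ℓ ≠ 0) : g + (2 / 3) * ℓ * (-(3 / (2 * ℓ)) * g) = 0 := by
  field_simp
  ring

section ThinLimits

variable {𝕜 ι : Type*} [Field 𝕜] [TopologicalSpace 𝕜] [IsTopologicalDivisionRing 𝕜]
  {l : Filter ι} {α : ι → 𝕜}

theorem tendsto_inv_one_add_of_tendsto_zero (hα : Tendsto α l (𝓝 0)) :
    Tendsto (fun x => (1 + α x)⁻¹) l (𝓝 1) := by
  have h_one_add : Tendsto (fun x => 1 + α x) l (𝓝 1) := by simpa using hα.const_add 1
  simpa using h_one_add.inv₀ one_ne_zero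

theorem tendsto_div_one_add_of_tendsto_zero (hα : Tendsto α l (𝓝 0)) :
    Tendsto (fun x => α x / (1 + α x)) l (𝓝 0) := by
  simpa [div_eq_mul_inv] using hα.mul (tendsto_inv_one_add_of_tendsto_zero hα)

theorem tendsto_const_mul_sq_div_nhds_zero (c D : 𝕜) :
    Tendsto (fun h : 𝕜 => c * h ^ 2 / D) (𝓝 0) (𝓝 0) := by
  have h_cont : Continuous fun h : 𝕜 => c * h ^ 2 / D := by fun_prop
  simpa using h_cont.tendsto 0

theorem tendsto_const_mul_sq_div_one_add_div_sq (c : 𝕜) {D : 𝕜} (hD : D ≠ 0) :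
    Tendsto (fun h : 𝕜 => c * h ^ 2 / D / (1 + c * h ^ 2 / D) / h ^ 2) (𝓝[≠] 0)
      (𝓝 (c / D)) := by
  have h_cont : ContinuousAt (fun h : 𝕜 => c / (D + c * h ^ 2)) 0 :=
    ContinuousAt.div₀ (by fun_prop) (by fun_prop) (by simpa using hD)
  have h_lim : Tendsto (fun h : 𝕜 => c / (D + c * h ^ 2)) (𝓝[≠] 0) (𝓝 (c / D)) := by
    simpa using h_cont.tendsto.mono_left nhdsWithin_le_nhds
  refine h_lim.congr' ?_
  filter_upwards [self_mem_nhdsWithin] with h hh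
  rw [div_div_one_add_div _ hD, div_right_comm, mul_div_cancel_right₀ c (pow_ne_zero 2 hh)]

end ThinLimits

theorem shear_locking_free_limit_general {𝕜 : Type*} [Field 𝕜] [CharZero 𝕜]
    [TopologicalSpace 𝕜] [IsTopologicalDivisionRing 𝕜] (κ ν ℓ wi wj βi βj g : 𝕜)
    (hκ : κ ≠ 0) (hν : ν ≠ 1) (hℓ : ℓ ≠ 0)
    (hg : g = (wj - wi) + (ℓ / 2) * (βi + βj))
    (α Δβ γbar : 𝕜 → 𝕜)
    (hα : ∀ h : 𝕜, α h = 2 * h ^ 2 / (κ * (1 - ν) * ℓ ^ 2))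
    (hΔβ : ∀ h : 𝕜, Δβ h = -(3 / (2 * ℓ * (1 + α h))) * g)
    (hγ : ∀ h : 𝕜, γbar h = (α h / (1 + α h)) * (g / ℓ)) :
    Tendsto γbar (𝓝 0) (𝓝 0) ∧
    Tendsto (fun h : 𝕜 => γbar h / h ^ 2) (𝓝[≠] 0) (𝓝 (2 * g / (κ * (1 - ν) * ℓ ^ 3))) ∧
    Tendsto Δβ (𝓝 0) (𝓝 (-(3 / (2 * ℓ)) * g)) ∧
    (wj - wi) + (ℓ / 2) * (βi + βj) + (2 / 3) * ℓ * (-(3 / (2 * ℓ)) * g) = 0 := by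
  have hD : κ * (1 - ν) * ℓ ^ 2 ≠ 0 :=
    mul_ne_zero (mul_ne_zero hκ (sub_ne_zero.2 hν.symm)) (pow_ne_zero 2 hℓ)
  have hα_zero : Tendsto α (𝓝 0) (𝓝 0) :=
    (tendsto_const_mul_sq_div_nhds_zero 2 _).congr fun h => (hα h).symm
  refine ⟨?_, ?_, ?_, hg ▸ discreteKirchhoff_constraint g hℓ⟩
  · simpa [← hγ] using (tendsto_div_one_add_of_tendsto_zero hα_zero).mul_const (g / ℓ)
  · convert (tendsto_const_mul_sq_div_one_add_div_sq 2 hD).mul_const (g / ℓ) using 2 with h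
    · rw [hγ, hα, mul_div_right_comm]
    · rw [div_mul_div_comm, mul_assoc (κ * (1 - ν)), ← pow_succ]
  · convert (tendsto_inv_one_add_of_tendsto_zero hα_zero).const_mul (-(3 / (2 * ℓ)) * g) using 2
      with h
    · rw [hΔβ, ← div_div]
      ring
    · ring

/-- Shear-locking-free behaviour at the edge level: with
`α(h) = 2h²/(κ(1 − ν)ℓ²)`, `Δβ(h) = −(3/(2ℓ(1 + α(h))))·g` and
`γ̄(h) = (α(h)/(1 + α(h)))·(g/ℓ)` where `g = (w_j − w_i) + (ℓ/2)(β_i + β_j)`,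
as `h → 0⁺`: (i) `γ̄(h) → 0` with `γ̄(h)/h² → 2g/(κ(1 − ν)ℓ³)`, and
(ii) `Δβ(h) → −(3/(2ℓ))·g`, and the limiting value satisfies the discrete
Kirchhoff constraint `(w_j − w_i) + (ℓ/2)(β_i + β_j) + (2/3)ℓ·Δβ = 0`. -/
theorem shear_locking_free_limit
    (E κ ν ℓ wi wj βi βj g : ℝ)
    (hE : 0 < E) (hκ : 0 < κ) (hν₁ : -1 < ν) (hν₂ : ν < 1) (hℓ : 0 < ℓ)
    (hg : g = (wj - wi) + (ℓ / 2) * (βi + βj))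
    (α Δβ γbar : ℝ → ℝ)
    (hα : ∀ h : ℝ, α h = 2 * h ^ 2 / (κ * (1 - ν) * ℓ ^ 2))
    (hΔβ : ∀ h : ℝ, Δβ h = -(3 / (2 * ℓ * (1 + α h))) * g)
    (hγ : ∀ h : ℝ, γbar h = (α h / (1 + α h)) * (g / ℓ)) :
    Tendsto γbar (𝓝[>] (0 : ℝ)) (𝓝 0) ∧
    Tendsto (fun h : ℝ => γbar h / h ^ 2) (𝓝[>] (0 : ℝ))
      (𝓝 (2 * g / (κ * (1 - ν) * ℓ ^ 3))) ∧
    Tendsto Δβ (𝓝[>] (0 : ℝ)) (𝓝 (-(3 / (2 * ℓ)) * g)) ∧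
    (wj - wi) + (ℓ / 2) * (βi + βj) + (2 / 3) * ℓ * (-(3 / (2 * ℓ)) * g) = 0 := by
  obtain ⟨h_strain, h_rate, h_rotation, h_kirchhoff⟩ := shear_locking_free_limit_general
    κ ν ℓ wi wj βi βj g hκ.ne' hν₂.ne hℓ.ne' hg α Δβ γbar hα hΔβ hγ
  exact ⟨h_strain.mono_left nhdsWithin_le_nhds, h_rate.mono_left (nhdsGT_le_nhdsNE 0),
    h_rotation.mono_left nhdsWithin_le_nhds, h_kirchhoff⟩
end
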